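/- Let V ⊆ Im ℍ^𝒜 be a two-dimensional real linear subspace such that ξ × ξ' = 0 for all ξ, ξ' ∈ V. Then there exists U ∈ Im ℍ^𝒜 with H(U, U) = 1 such that V = {aU : a ∈ 𝒜}. -/

import Mathlib

/-!
The algebra of Lorentz numbers `𝒜 = {x + σy}` with `σ² = 1` is identified with the
product ring `ℝ × ℝ` via `x + σy ↦ (x + y, x − y)`, under which `σ ↦ (1, −1)`.
`ℍ^𝒜` is the quaternion algebra over this commutative ring.
-/

noncomputable section

/-- The algebra of Lorentz numbers `𝒜`, identified with the product ring `ℝ × ℝ`. -/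
abbrev LorentzA : Type := ℝ × ℝ

/-- `ℍ^𝒜`, the quaternions with coefficients in the Lorentz numbers `𝒜`. -/
abbrev HA : Type := Quaternion LorentzA

/-- The Lorentz number `σ`, corresponding to `(1, -1)` in `ℝ × ℝ`. -/
def σA : LorentzA := (1, -1)

/-- `σ` viewed as an element of `ℍ^𝒜`. -/
def σQ : HA := ((σA : LorentzA) : HA)

/-- The embedding of `ℝ` in `𝒜` (the diagonal of `ℝ × ℝ`). -/
def toA (x : ℝ) : LorentzA := (x, x)

/-- The `𝒜`-valued pairing `H` on `ℍ^𝒜`: `H(ξ, ξ') = a₀a₀' + a₁a₁' + a₂a₂' + a₃a₃'`. -/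
def Hform (ξ ξ' : HA) : LorentzA :=
  ξ.re * ξ'.re + ξ.imI * ξ'.imI + ξ.imJ * ξ'.imJ + ξ.imK * ξ'.imK

/-- The conjugation `x + σy ↦ x − σy` of `𝒜`, i.e. the swap of the factors of `ℝ × ℝ`. -/
def swapA (a : LorentzA) : LorentzA := (a.2, a.1)

/-- The hat operation on `ℍ^𝒜`, applying the conjugation of `𝒜` to each coefficient. -/
def hatQ (ξ : HA) : HA := ⟨swapA ξ.re, swapA ξ.imI, swapA ξ.imJ, swapA ξ.imK⟩

/-- The imaginary unit `I` of `ℍ^𝒜`. -/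
def Iq : HA := ⟨0, 1, 0, 0⟩
/-- The imaginary unit `J` of `ℍ^𝒜`. -/
def Jq : HA := ⟨0, 0, 1, 0⟩
/-- The imaginary unit `K` of `ℍ^𝒜`. -/
def Kq : HA := ⟨0, 0, 0, 1⟩

/-- The embedding of Euclidean `ℝ⁴` into `ℍ^𝒜`: `(x₀,x₁,x₂,x₃) ↦ σx₀·1 + x₁I + x₂J + x₃K`. -/
def embR4 (x₀ x₁ x₂ x₃ : ℝ) : HA := ⟨(x₀, -x₀), toA x₁, toA x₂, toA x₃⟩

/-- `ℝ⁴` as a subset of `ℍ^𝒜`: `{ξ : hat(conj ξ) = -ξ}`. -/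
def R4set : Set HA := {ξ | hatQ (star ξ) = -ξ}

/-- The embedding `ι : ℍ → ℍ^𝒜` induced by the diagonal inclusion `ℝ → ℝ × ℝ ≅ 𝒜`. -/
def iotaH (q : Quaternion ℝ) : HA := ⟨toA q.re, toA q.imI, toA q.imJ, toA q.imK⟩

/-- Componentwise cosine on `𝒜 ≅ ℝ × ℝ`. -/
def cosA (a : LorentzA) : LorentzA := (Real.cos a.1, Real.cos a.2)
/-- Componentwise sine on `𝒜 ≅ ℝ × ℝ`. -/
def sinA (a : LorentzA) : LorentzA := (Real.sin a.1, Real.sin a.2)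

/-- The Lorentz number `θ₁ + σθ₂`, i.e. `(θ₁ + θ₂, θ₁ − θ₂)` in `ℝ × ℝ`. -/
def mkA (θ₁ θ₂ : ℝ) : LorentzA := (θ₁ + θ₂, θ₁ - θ₂)

/-- The cross product of two imaginary elements of `ℍ^𝒜`: `ξ × ξ' = (ξξ' − ξ'ξ)/2`. -/
def crossP (ξ ξ' : HA) : HA := (1/2 : ℝ) • (ξ * ξ' - ξ' * ξ)

/-- `(1+σ)/2` in `ℍ^𝒜`. -/
def halfPlus : HA := (1/2 : ℝ) • ((1 : HA) + σQ)
/-- `(1−σ)/2` in `ℍ^𝒜`. -/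
def halfMinus : HA := (1/2 : ℝ) • ((1 : HA) - σQ)

/-!
Over `ℝ × ℝ` a quaternion is a pair of real quaternions, so `Im ℍ^𝒜` is two copies of `ℝ³`, and
`ξ × ξ' = 0` says that both components commute. Commuting imaginary real quaternions are parallel,
so each projection of `V` lies on a line `ℝu`, `ℝv` with `u`, `v` of norm one; then `V ⊆ 𝒜U` with
`U = (u, v)`. Both sides have real dimension two, whence equality.
-/

section Quaternion

open scoped Quaternion

variable {R S : Type*} [CommRing R] [CommRing S]

/-- The isomorphism `ℍ[R × S] ≃ ℍ[R] × ℍ[S]` taking the components of each coefficient; it reduces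
questions about `ℍ^𝒜` to real quaternions. -/
def quaternionProdEquiv : ℍ[R × S] ≃+* ℍ[R] × ℍ[S] where
  toFun x := (⟨x.re.1, x.imI.1, x.imJ.1, x.imK.1⟩, ⟨x.re.2, x.imI.2, x.imJ.2, x.imK.2⟩)
  invFun p := ⟨(p.1.re, p.2.re), (p.1.imI, p.2.imI), (p.1.imJ, p.2.imJ), (p.1.imK, p.2.imK)⟩
  left_inv _ := rfl
  right_inv _ := rfl
  map_add' _ _ := rfl
  map_mul' _ _ := rfl

lemma quaternionProdEquiv_smul (a : R × S) (x : ℍ[R × S]) :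
    quaternionProdEquiv (a • x) =
      (a.1 • (quaternionProdEquiv x).1, a.2 • (quaternionProdEquiv x).2) :=
  rfl

lemma re_quaternionProdEquiv_symm (p : ℍ[R] × ℍ[S]) :
    (quaternionProdEquiv.symm p).re = (p.1.re, p.2.re) :=
  rfl

lemma normSq_quaternionProdEquiv_symm (p : ℍ[R] × ℍ[S]) :
    Quaternion.normSq (quaternionProdEquiv.symm p) =
      (Quaternion.normSq p.1, Quaternion.normSq p.2) :=
  rfl

lemma mul_eq_coe_re_of_commute [NoZeroDivisors R] [CharZero R] {p q : ℍ[R]} (hp : p.re = 0)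
    (hq : q.re = 0) (hpq : Commute p q) : p * q = ((p * q).re : ℍ[R]) := by
  rw [← Quaternion.star_eq_self, star_mul, Quaternion.star_eq_neg.2 hp,
    Quaternion.star_eq_neg.2 hq, neg_mul_neg, hpq.eq]

lemma normSq_smul_eq_neg_re_mul_smul [NoZeroDivisors R] [CharZero R] {p q : ℍ[R]}
    (hp : p.re = 0) (hq : q.re = 0) (hpq : Commute p q) :
    Quaternion.normSq p • q = -(p * q).re • p :=
  calc Quaternion.normSq p • q = star p * (p * q) := by
        rw [← mul_assoc, Quaternion.star_mul_self, Quaternion.coe_mul_eq_smul]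
    _ = -p * ((p * q).re : ℍ[R]) := by
        rw [Quaternion.star_eq_neg.2 hp, ← mul_eq_coe_re_of_commute hp hq hpq]
    _ = -(p * q).re • p := by
        rw [Quaternion.mul_coe_eq_smul, smul_neg, neg_smul]

lemma mem_span_singleton_of_commute {K : Type*} [Field K] [LinearOrder K] [IsStrictOrderedRing K]
    {p q : ℍ[K]} (hp0 : p ≠ 0) (hp : p.re = 0) (hq : q.re = 0) (hpq : Commute p q) :
    q ∈ Submodule.span K {p} := by
  rw [← Submodule.smul_mem_iff _ (Quaternion.normSq_ne_zero.2 hp0),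
    normSq_smul_eq_neg_re_mul_smul hp hq hpq]
  exact Submodule.smul_mem _ _ (Submodule.mem_span_singleton_self p)

lemma exists_unit_subset_span_of_commute {s : Set ℍ[ℝ]} (hre : ∀ p ∈ s, p.re = 0)
    (hs : ∀ p ∈ s, ∀ q ∈ s, Commute p q) :
    ∃ u : ℍ[ℝ], u.re = 0 ∧ Quaternion.normSq u = 1 ∧ s ⊆ Submodule.span ℝ {u} := by
  by_cases h : ∃ p ∈ s, p ≠ 0
  · obtain ⟨p, hps, hp⟩ := h
    have hnorm : ‖p‖⁻¹ ≠ 0 := inv_ne_zero (norm_ne_zero_iff.2 hp)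
    refine ⟨‖p‖⁻¹ • p, by simp [hre p hps], ?_, fun q hq => ?_⟩
    · rw [Quaternion.normSq_eq_norm_mul_self, norm_smul, norm_inv, norm_norm,
        inv_mul_cancel₀ (norm_ne_zero_iff.2 hp), one_mul]
    · rw [Submodule.span_singleton_smul_eq hnorm.isUnit]
      exact mem_span_singleton_of_commute hp (hre p hps) (hre q hq) (hs p hps q hq)
  · push Not at h
    refine ⟨⟨0, 1, 0, 0⟩, rfl, (Quaternion.normSq_def' _).trans (by norm_num), fun p hp => ?_⟩
    rw [h p hp]
    exact Submodule.zero_mem _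

lemma exists_unit_subset_span_of_commute_prod {s : Set ℍ[ℝ × ℝ]} (hre : ∀ x ∈ s, x.re = 0)
    (hs : ∀ x ∈ s, ∀ y ∈ s, Commute x y) :
    ∃ U : ℍ[ℝ × ℝ], U.re = 0 ∧ Quaternion.normSq U = 1 ∧ s ⊆ Submodule.span (ℝ × ℝ) {U} := by
  let e : ℍ[ℝ × ℝ] ≃+* ℍ[ℝ] × ℍ[ℝ] := quaternionProdEquiv
  have hcomm : ∀ x ∈ s, ∀ y ∈ s, Commute (e x) (e y) := fun x hx y hy => (hs x hx y hy).map e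
  obtain ⟨u, hu_re, hu, hsu⟩ := exists_unit_subset_span_of_commute
    (s := (fun x => (e x).1) '' s)
    (Set.forall_mem_image.2 fun x hx => congrArg Prod.fst (hre x hx))
    (Set.forall_mem_image.2 fun x hx => Set.forall_mem_image.2 fun y hy =>
      (hcomm x hx y hy).map (RingHom.fst _ _))
  obtain ⟨v, hv_re, hv, hsv⟩ := exists_unit_subset_span_of_commute
    (s := (fun x => (e x).2) '' s)
    (Set.forall_mem_image.2 fun x hx => congrArg Prod.snd (hre x hx))
    (Set.forall_mem_image.2 fun x hx => Set.forall_mem_image.2 fun y hy =>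
      (hcomm x hx y hy).map (RingHom.snd _ _))
  refine ⟨e.symm (u, v), ?_, ?_, fun x hx => ?_⟩
  · rw [re_quaternionProdEquiv_symm, hu_re, hv_re, Prod.mk_zero_zero]
  · rw [normSq_quaternionProdEquiv_symm, hu, hv, Prod.mk_one_one]
  · obtain ⟨a, ha⟩ := Submodule.mem_span_singleton.1 (hsu (Set.mem_image_of_mem _ hx))
    obtain ⟨b, hb⟩ := Submodule.mem_span_singleton.1 (hsv (Set.mem_image_of_mem _ hx))
    refine Submodule.mem_span_singleton.2 ⟨(a, b), e.injective ?_⟩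
    rw [quaternionProdEquiv_smul, e.apply_symm_apply, ha, hb]

end Quaternion

lemma finrank_restrictScalars_span_singleton_le (K : Type*) {A M : Type*} [CommRing K]
    [StrongRankCondition K] [Ring A] [Algebra K A] [Module.Finite K A] [AddCommGroup M]
    [Module A M] [Module K M] [IsScalarTower K A M] (m : M) :
    Module.finrank K ((Submodule.span A {m}).restrictScalars K) ≤ Module.finrank K A := by
  rw [← LinearMap.range_toSpanSingleton, ← LinearMap.range_restrictScalars]
  exact LinearMap.finrank_range_le _

lemma crossP_eq_zero_iff (ξ ξ' : HA) : crossP ξ ξ' = 0 ↔ Commute ξ ξ' := by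
  rw [crossP, one_div, inv_smul_eq_iff₀ two_ne_zero, smul_zero, sub_eq_zero, commute_iff_eq]

lemma Hform_self (ξ : HA) : Hform ξ ξ = Quaternion.normSq ξ := by
  simp only [Hform, Quaternion.normSq_def', sq]

/-- A two-dimensional real subspace `V ⊆ Im ℍ^𝒜` on which the cross
product vanishes identically is an `𝒜`-line: `V = {aU : a ∈ 𝒜}` for some `U ∈ Im ℍ^𝒜`
with `H(U, U) = 1`. -/
theorem plane_with_zero_cross_is_A_line (V : Submodule ℝ HA)
    (hIm : ∀ ξ ∈ V, ξ.re = 0)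
    (hdim : Module.finrank ℝ V = 2)
    (hcross : ∀ ξ ∈ V, ∀ ξ' ∈ V, crossP ξ ξ' = 0) :
    ∃ U : HA, U.re = 0 ∧ Hform U U = 1 ∧
      (V : Set HA) = {x : HA | ∃ a : LorentzA, x = (a : HA) * U} := by
  obtain ⟨U, hU_re, hU, hVU⟩ := exists_unit_subset_span_of_commute_prod (s := (V : Set HA)) hIm
    fun ξ hξ ξ' hξ' => (crossP_eq_zero_iff ξ ξ').1 (hcross ξ hξ ξ' hξ')
  have : Module.Finite ℝ HA := Module.Finite.trans LorentzA HA
  have hfinrank : Module.finrank ℝ ((Submodule.span LorentzA {U}).restrictScalars ℝ) ≤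
      Module.finrank ℝ V :=
    (finrank_restrictScalars_span_singleton_le ℝ U).trans_eq (by simp [hdim])
  have hV : V = (Submodule.span LorentzA {U}).restrictScalars ℝ :=
    Submodule.eq_of_le_of_finrank_le hVU hfinrank
  refine ⟨U, hU_re, (Hform_self U).trans hU, ?_⟩
  ext x
  rw [hV, SetLike.mem_coe, Submodule.restrictScalars_mem, Submodule.mem_span_singleton]
  simp only [Set.mem_ofPred_eq, Quaternion.coe_mul_eq_smul, eq_comm]
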